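/- The scaled initial degrees of the symbolic powers converge: lim_{m → ∞} α(I^{(m)})/m = 2 − 1/l, where α(I^{(m)}) denotes the least degree of a nonzero homogeneous element of I^{(m)}. (This is the x-intercept of the limiting shape of the symbolic generic initial system of I.) -/

import Mathlib

open MvPolynomial Filter

/-- The degree-`d` homogeneous component of a homogeneous ideal `J ⊆ K[x,y,z]`,
as a `K`-vector subspace. -/
noncomputable def degComp {K : Type*} [Field K] (J : Ideal (MvPolynomial (Fin 3) K)) (d : ℕ) :
    Submodule K (MvPolynomial (Fin 3) K) :=
  Submodule.restrictScalars K J ⊓ homogeneousSubmodule (Fin 3) K d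

/-- `dim_K J_d`. -/
noncomputable def hdim {K : Type*} [Field K] (J : Ideal (MvPolynomial (Fin 3) K)) (d : ℕ) : ℕ :=
  Module.finrank K (degComp J d)

/-- The subspace `R_1 · J_{d-1}` of products of linear forms with degree-`(d-1)` elements. -/
noncomputable def oneGen {K : Type*} [Field K] (J : Ideal (MvPolynomial (Fin 3) K)) (d : ℕ) :
    Submodule K (MvPolynomial (Fin 3) K) :=
  Submodule.span K
    {x | ∃ f ∈ homogeneousSubmodule (Fin 3) K 1, ∃ g ∈ degComp J (d - 1), x = f * g}

/-- `v_d(J) = dim_K J_d / (R_1 · J_{d-1})`, the number of minimal generators of `J`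
in degree `d`. -/
noncomputable def vnum {K : Type*} [Field K] (J : Ideal (MvPolynomial (Fin 3) K)) (d : ℕ) : ℕ :=
  Module.finrank K
    (↥(degComp J d) ⧸ Submodule.comap (degComp J d).subtype (oneGen J d))

/-!
Let `q` be the point off the line `ℓ = 0`, let `p₀, …, pₙ` be the points on it, and let `nᵢ = 0` be
the line through `pᵢ` and `q`.

Lower bound: the curves of degree `n + 1` with an `n`-fold point at `q` and passing through all
the `pᵢ` sweep out the plane, so a nonzero form `f` of degree `d` in `I^(m)` cannot vanish on all
of them and Bézout's theorem gives `(n + 1) d ≥ (n + 1) m + n m`. These curves are the images of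
lines under maps of degree `n + 1` that send `ℓ = 0` to `q` to order `n` and each `nᵢ = 0` to
`pᵢ`. The pullback of `f` along such a map has degree `(n + 1) d` and is divisible by
`ℓ ^ (n m) * ∏ nᵢ ^ m`, which replaces the intersection theory; it is nonzero once the free
parameter of the map is chosen, over the function field of the plane, so that the generic point is
fixed.

Upper bound: `ℓ ^ (m - k) * (∏ nᵢ) ^ k` with `(n + 1) k ≈ m` lies in `I^(m)`.
-/

namespace FatPoints

open Matrix

section PointIdeal

variable {σ R : Type*} [CommRing R]

/-- The homogeneous ideal of the point of projective space with coordinates `a`: the polynomials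
vanishing identically on the line `t ↦ t a` through the origin. -/
noncomputable def pointIdeal (a : σ → R) : Ideal (MvPolynomial σ R) :=
  RingHom.ker (aeval fun j => Polynomial.C (a j) * Polynomial.X :
    MvPolynomial σ R →ₐ[R] Polynomial R)

lemma mem_pointIdeal {a : σ → R} {F : MvPolynomial σ R} :
    F ∈ pointIdeal a ↔ aeval (fun j => Polynomial.C (a j) * Polynomial.X) F = 0 :=
  Iff.rfl

lemma coeff_aeval_C_mul_X (a : σ → R) (F : MvPolynomial σ R) (n : ℕ) :
    (aeval (fun j => Polynomial.C (a j) * Polynomial.X) F).coeff n =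
      eval a (homogeneousComponent n F) := by
  induction F using MvPolynomial.induction_on' with
  | add F G hF hG => simp only [map_add, Polynomial.coeff_add, hF, hG]
  | monomial s c =>
    have hs : aeval (fun j => Polynomial.C (a j) * Polynomial.X) (monomial s c) =
        Polynomial.C (eval a (monomial s c)) * Polynomial.X ^ s.degree := by
      simp only [aeval_monomial, eval_monomial, mul_pow, Finsupp.prod, Finset.prod_mul_distrib,
        Finset.prod_pow_eq_pow_sum, Finsupp.degree_apply, map_mul, map_prod, map_pow,
        Polynomial.algebraMap_eq, mul_assoc]
    rw [hs, Polynomial.coeff_C_mul_X_pow,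
      homogeneousComponent_of_mem (isHomogeneous_monomial c rfl)]
    split_ifs <;> simp

lemma mem_pointIdeal_iff_eval_homogeneousComponent {a : σ → R} {F : MvPolynomial σ R} :
    F ∈ pointIdeal a ↔ ∀ n, eval a (homogeneousComponent n F) = 0 := by
  simp only [mem_pointIdeal, Polynomial.ext_iff, coeff_aeval_C_mul_X, Polynomial.coeff_zero]

lemma eval_smul_of_isHomogeneous {F : MvPolynomial σ R} {d : ℕ} (hF : F.IsHomogeneous d) (c : R)
    (a : σ → R) : eval (c • a) F = c ^ d * eval a F := by
  rw [eval_eq, eval_eq, Finset.mul_sum]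
  refine Finset.sum_congr rfl fun s hs => ?_
  simp only [Pi.smul_apply, smul_eq_mul, mul_pow, Finset.prod_mul_distrib,
    Finset.prod_pow_eq_pow_sum, hF.degree_eq_sum_deg_support hs]
  ring

lemma map_mem_pointIdeal_pow {S : Type*} [CommRing S] (φ : R →+* S) {a : σ → R} {m : ℕ}
    {f : MvPolynomial σ R} (hf : f ∈ pointIdeal a ^ m) :
    MvPolynomial.map φ f ∈ pointIdeal (φ ∘ a) ^ m := by
  refine Ideal.le_comap_pow _ m (Ideal.pow_right_mono (fun F hF => ?_) m hf)
  have h := congr(Polynomial.mapRingHom φ $(mem_pointIdeal.1 hF))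
  rw [map_zero, map_aeval, coe_eval₂Hom] at h
  rw [Ideal.mem_comap, mem_pointIdeal, aeval_def, eval₂_map, ← h]
  congr 1
  · ext; simp
  · ext; simp

lemma aeval_mem_pow_of_mem_pointIdeal_pow {K S : Type*} [Field K] [CommRing S] [Algebra K S]
    {a : σ → K} (ha : a ≠ 0) {γ : σ → S} {H : Ideal S}
    (hγ : ∀ j k, algebraMap K S (a j) * γ k - algebraMap K S (a k) * γ j ∈ H)
    {m : ℕ} {f : MvPolynomial σ K} (hf : f ∈ pointIdeal a ^ m) : aeval γ f ∈ H ^ m := by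
  obtain ⟨k, hk⟩ := Function.ne_iff.1 ha
  let π := Ideal.Quotient.mkₐ K H
  set c : S ⧸ H := algebraMap K _ (a k)⁻¹ * π (γ k)
  have hc (j) : π (γ j) = algebraMap K _ (a j) * c := by
    have h : π (algebraMap K S (a j) * γ k) = π (algebraMap K S (a k) * γ j) :=
      Ideal.Quotient.eq.2 (hγ j k)
    simp only [map_mul, AlgHom.commutes] at h
    rw [mul_left_comm, h, ← mul_assoc, ← map_mul, inv_mul_cancel₀ hk, map_one, one_mul]
  have hcomp : π.comp (aeval γ) = (Polynomial.aeval c).comp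
      (aeval fun j => Polynomial.C (a j) * Polynomial.X) := by
    ext j
    simp [hc]
  refine Ideal.le_comap_pow (aeval γ : _ →ₐ[K] S) m (Ideal.pow_right_mono (fun F hF => ?_) m hf)
  have h := DFunLike.congr_fun hcomp F
  rw [AlgHom.comp_apply, AlgHom.comp_apply, mem_pointIdeal.1 hF, map_zero] at h
  exact Ideal.mem_comap.2 (Ideal.Quotient.eq_zero_iff_mem.1 h)

end PointIdeal

section LinearForm

variable {σ R : Type*} [Fintype σ] [CommRing R]

/-- The linear form `∑ aⱼ xⱼ` with coefficient vector `a`. -/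
noncomputable def linearForm (a : σ → R) : MvPolynomial σ R := ∑ j, C (a j) * X j

lemma isHomogeneous_linearForm (a : σ → R) : (linearForm a).IsHomogeneous 1 :=
  IsHomogeneous.sum _ _ _ fun _ _ => isHomogeneous_C_mul_X _ _

lemma isHomogeneous_prod_linearForm {ι : Type*} [Fintype ι] (a : ι → σ → R) :
    (∏ i, linearForm (a i)).IsHomogeneous (Fintype.card ι) := by
  simpa using IsHomogeneous.prod Finset.univ _ _ fun i _ => isHomogeneous_linearForm (a i)

@[simp]
lemma aeval_linearForm {S : Type*} [CommRing S] [Algebra R S] (a : σ → R) (x : σ → S) :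
    aeval x (linearForm a) = ∑ j, algebraMap R S (a j) * x j := by
  simp [linearForm]

@[simp]
lemma eval_linearForm (a b : σ → R) : eval b (linearForm a) = a ⬝ᵥ b := by
  simp [linearForm, dotProduct]

lemma linearForm_ne_zero {a : σ → R} (ha : a ≠ 0) : linearForm a ≠ 0 := by
  classical
  obtain ⟨j, hj⟩ := Function.ne_iff.1 ha
  intro h
  apply hj
  simpa [h] using (eval_linearForm a (Pi.single j 1)).symm

lemma linearForm_mem_pointIdeal {a b : σ → R} (h : a ⬝ᵥ b = 0) : linearForm a ∈ pointIdeal b := by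
  rw [mem_pointIdeal, aeval_linearForm]
  simp only [Polynomial.algebraMap_eq, ← mul_assoc, ← Finset.sum_mul, ← map_mul, ← map_sum]
  rw [← dotProduct, h, map_zero, zero_mul]

lemma irreducible_linearForm {K : Type*} [Field K] {a : σ → K} (ha : a ≠ 0) :
    Irreducible (linearForm a) := by
  have h0 := linearForm_ne_zero ha
  refine irreducible_of_totalDegree_eq_one ((isHomogeneous_linearForm a).totalDegree h0)
    fun c hc => ?_
  obtain ⟨s, hs⟩ := MvPolynomial.ne_zero_iff.1 h0
  exact (ne_zero_of_dvd_ne_zero hs (hc s)).isUnit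

lemma isRelPrime_linearForm {K : Type*} [Field K] {a b v : σ → K} (hav : a ⬝ᵥ v = 0)
    (hbv : b ⬝ᵥ v ≠ 0) (ha : a ≠ 0) : IsRelPrime (linearForm a) (linearForm b) := by
  rw [(irreducible_linearForm ha).isRelPrime_iff_not_dvd]
  intro h
  have hdvd := map_dvd (eval v) h
  rw [eval_linearForm, eval_linearForm, hav, zero_dvd_iff] at hdvd
  exact hbv hdvd

end LinearForm

section CrossProduct

variable {K : Type*} [Field K] {L q p p' : Fin 3 → K}

lemma comp_cross {R S : Type*} [CommRing R] [CommRing S] (φ : R →+* S) (u v : Fin 3 → R) :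
    φ ∘ (u ⨯₃ v) = (φ ∘ u) ⨯₃ (φ ∘ v) := by
  ext i
  fin_cases i <;> simp [cross_apply]

lemma mul_sub_mul_mem_of_cross_mem {S : Type*} [CommRing S] {u v : Fin 3 → S} {H : Ideal S}
    (h : ∀ i, (u ⨯₃ v) i ∈ H) (j k : Fin 3) : u j * v k - u k * v j ∈ H := by
  have h₀ : u 1 * v 2 - u 2 * v 1 ∈ H := h 0
  have h₁ : u 2 * v 0 - u 0 * v 2 ∈ H := h 1
  have h₂ : u 0 * v 1 - u 1 * v 0 ∈ H := h 2
  have self (x : S) : x - x ∈ H := (sub_self x).symm ▸ zero_mem H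
  have swap {x y : S} (hxy : x - y ∈ H) : y - x ∈ H := neg_sub x y ▸ neg_mem hxy
  fin_cases j <;> fin_cases k
  exacts [self _, h₂, swap h₁, swap h₂, self _, h₀, h₁, swap h₀, self _]

lemma cross_ne_zero_of_dot (hp : p ≠ 0) (hLp : L ⬝ᵥ p = 0) (hLq : L ⬝ᵥ q ≠ 0) : p ⨯₃ q ≠ 0 := by
  intro h
  have hexpand := cross_cross_eq_smul_sub_smul' L p q
  rw [h, map_zero, dotProduct_comm p L, hLp, zero_smul, sub_zero] at hexpand
  exact smul_ne_zero hLq hp hexpand.symm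

lemma triple_product_ne_zero (hp : p ≠ 0) (hpp' : ∀ c : K, c • p ≠ p')
    (hLp : L ⬝ᵥ p = 0) (hLp' : L ⬝ᵥ p' = 0) (hLq : L ⬝ᵥ q ≠ 0) : q ⬝ᵥ p ⨯₃ p' ≠ 0 := by
  have hcross : p ⨯₃ p' ≠ 0 :=
    crossProduct_ne_zero_iff_linearIndependent.2 ((LinearIndependent.pair_iff' hp).2 hpp')
  intro h
  have hzero : L ⨯₃ (p ⨯₃ p') = 0 := by
    rw [cross_cross_eq_smul_sub_smul', hLp', dotProduct_comm, hLp, zero_smul, zero_smul, sub_zero]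
  have hexpand := cross_cross_eq_smul_sub_smul' q L (p ⨯₃ p')
  rw [hzero, map_zero, h, zero_smul, zero_sub] at hexpand
  exact smul_ne_zero hLq hcross (neg_eq_zero.1 hexpand.symm)

end CrossProduct

section DeJonquieres

variable {R : Type*} [CommRing R] {L q : Fin 3 → R} {G : MvPolynomial (Fin 3) R} {n : ℕ}

/-- The self-map `v ↦ (L ⬝ q) ℓ(v)ⁿ v + (G(v) - ℓ(v)ⁿ⁺¹) q` of the plane, where `ℓ = linearForm L`.
It preserves every line through `q`; on `ℓ = 0` it is constant equal to `q` and on `G = 0` it is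
the projection from `q` onto `ℓ = 0`. When `G` has degree `n + 1` it is given by forms of this
degree. -/
noncomputable def deJonquieres (L q : Fin 3 → R) (G : MvPolynomial (Fin 3) R) (n : ℕ) :
    Fin 3 → MvPolynomial (Fin 3) R :=
  (C (L ⬝ᵥ q) * linearForm L ^ n) • X + (G - linearForm L ^ (n + 1)) • (C ∘ q)

lemma isHomogeneous_deJonquieres (hG : G.IsHomogeneous (n + 1)) (j : Fin 3) :
    (deJonquieres L q G n j).IsHomogeneous (n + 1) := by
  have hℓ := isHomogeneous_linearForm L
  refine .add ?_ ?_
  · simpa using ((hℓ.pow n).C_mul (L ⬝ᵥ q)).mul (isHomogeneous_X R j)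
  · simpa using (hG.sub (by simpa using hℓ.pow (n + 1))).mul (isHomogeneous_C _ (q j))

lemma eval_aeval_deJonquieres {w : Fin 3 → R} (hw : eval w G = (L ⬝ᵥ w) ^ (n + 1))
    {f : MvPolynomial (Fin 3) R} {d : ℕ} (hf : f.IsHomogeneous d) :
    eval w (aeval (deJonquieres L q G n) f) =
      ((L ⬝ᵥ q) * (L ⬝ᵥ w) ^ n) ^ d * eval w f := by
  have hpoint : (fun j => eval w (deJonquieres L q G n j)) = ((L ⬝ᵥ q) * (L ⬝ᵥ w) ^ n) • w := by
    ext j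
    simp [deJonquieres, hw]
  rw [← eval_smul_of_isHomogeneous hf, ← hpoint, ← coe_aeval_eq_eval, ← coe_aeval_eq_eval]
  exact DFunLike.congr_fun (comp_aeval _ (aeval w)) f

lemma dvd_cross_deJonquieres_center (i : Fin 3) :
    linearForm L ^ n ∣ ((C ∘ q) ⨯₃ deJonquieres L q G n) i := by
  rw [deJonquieres, map_add, map_smul, map_smul, cross_self, smul_zero, add_zero, mul_comm,
    mul_smul]
  exact dvd_mul_right _ _

lemma dvd_cross_deJonquieres_line {p : Fin 3 → R} (hLp : L ⬝ᵥ p = 0)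
    (hG : linearForm (p ⨯₃ q) ∣ G) (i : Fin 3) :
    linearForm (p ⨯₃ q) ∣ ((C ∘ p) ⨯₃ deJonquieres L q G n) i := by
  have hC (a b : Fin 3 → R) : (C ∘ a) ⬝ᵥ (C ∘ b) = (C (a ⬝ᵥ b) : MvPolynomial (Fin 3) R) :=
    (RingHom.map_dotProduct C a b).symm
  have hX (a : Fin 3 → R) : (C ∘ a) ⬝ᵥ X = linearForm a := rfl
  have hdeJ : deJonquieres L q G n =
      linearForm L ^ n • ((C ∘ L) ⨯₃ (X ⨯₃ (C ∘ q))) + G • (C ∘ q) := by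
    rw [cross_cross_eq_smul_sub_smul', hC, dotProduct_comm X, hX, deJonquieres]
    module
  have htriple : (C ∘ p) ⬝ᵥ (X ⨯₃ (C ∘ q)) = -linearForm (p ⨯₃ q) := by
    simp only [vec3_dotProduct, cross_apply, linearForm, Fin.sum_univ_three, Function.comp_apply,
      cons_val, map_sub, map_mul]
    ring
  have hline : (C ∘ p) ⨯₃ ((C ∘ L) ⨯₃ (X ⨯₃ (C ∘ q))) = -linearForm (p ⨯₃ q) • (C ∘ L) := by
    rw [cross_cross_eq_smul_sub_smul', htriple, hC, hLp, C_0, zero_smul, sub_zero]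
  rw [hdeJ, map_add, map_smul, map_smul, hline]
  exact dvd_add (((dvd_neg.2 dvd_rfl).mul_right _).mul_left _) (hG.mul_right _)

end DeJonquieres

section LowerBound

variable {K : Type*} [Field K] {L q : Fin 3 → K} {G : MvPolynomial (Fin 3) K} {n : ℕ}

lemma pow_dvd_aeval_of_dvd_cross {S : Type*} [CommRing S] [Algebra K S] {p : Fin 3 → K}
    (hp : p ≠ 0) {γ : Fin 3 → S} {h : S} (hγ : ∀ i, h ∣ ((algebraMap K S ∘ p) ⨯₃ γ) i)
    {m : ℕ} {f : MvPolynomial (Fin 3) K} (hf : f ∈ pointIdeal p ^ m) : h ^ m ∣ aeval γ f := by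
  rw [← Ideal.mem_span_singleton, ← Ideal.span_singleton_pow]
  exact aeval_mem_pow_of_mem_pointIdeal_pow hp
    (mul_sub_mul_mem_of_cross_mem fun i => Ideal.mem_span_singleton.2 (hγ i)) hf

lemma isRelPrime_linearForm_cross {p p' : Fin 3 → K} (h : q ⬝ᵥ p ⨯₃ p' ≠ 0) :
    IsRelPrime (linearForm (p ⨯₃ q)) (linearForm (p' ⨯₃ q)) := by
  refine isRelPrime_linearForm (v := p) ?_ ?_ ?_
  · rw [dotProduct_comm, dot_self_cross]
  · rwa [dotProduct_comm, ← triple_product_permutation]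
  · intro h0
    rw [triple_product_permutation, triple_product_permutation, ← cross_anticomm, h0, neg_zero,
      dotProduct_zero] at h
    exact h rfl

variable {ι : Type*} [Fintype ι] {p : ι → Fin 3 → K}

lemma pow_mul_prod_pow_dvd_aeval_deJonquieres (hq : L ⬝ᵥ q ≠ 0) (hp : ∀ i, p i ≠ 0)
    (hLp : ∀ i, L ⬝ᵥ p i = 0) (htriple : Pairwise fun i j => q ⬝ᵥ p i ⨯₃ p j ≠ 0)
    (hG : ∀ i, linearForm (p i ⨯₃ q) ∣ G)
    {m : ℕ} {f : MvPolynomial (Fin 3) K} (hfq : f ∈ pointIdeal q ^ m)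
    (hfp : ∀ i, f ∈ pointIdeal (p i) ^ m) :
    (linearForm L ^ n) ^ m * ∏ i, linearForm (p i ⨯₃ q) ^ m ∣
      aeval (deJonquieres L q G n) f := by
  have hq0 : q ≠ 0 := by
    rintro rfl
    exact hq (dotProduct_zero L)
  refine IsRelPrime.mul_dvd ?_ (pow_dvd_aeval_of_dvd_cross hq0 dvd_cross_deJonquieres_center hfq) ?_
  · refine IsRelPrime.prod_right fun i _ => IsRelPrime.pow (IsRelPrime.pow_left ?_)
    refine (isRelPrime_linearForm (v := q) ?_ hq ?_).symm
    · rw [dotProduct_comm, dot_cross_self]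
    · exact cross_ne_zero_of_dot (hp i) (hLp i) hq
  · refine Fintype.prod_dvd_of_isRelPrime
      (fun i j hij => (isRelPrime_linearForm_cross (htriple hij)).pow) fun i => ?_
    exact pow_dvd_aeval_of_dvd_cross (hp i) (dvd_cross_deJonquieres_line (hLp i) (hG i)) (hfp i)

lemma mul_le_mul_degree_of_eval_ne_zero (hι : Fintype.card ι = n + 1) (hq : L ⬝ᵥ q ≠ 0)
    (hp : ∀ i, p i ≠ 0) (hLp : ∀ i, L ⬝ᵥ p i = 0)
    (htriple : Pairwise fun i j => q ⬝ᵥ p i ⨯₃ p j ≠ 0) {m d : ℕ} {f : MvPolynomial (Fin 3) K}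
    (hfq : f ∈ pointIdeal q ^ m) (hfp : ∀ i, f ∈ pointIdeal (p i) ^ m) (hfd : f.IsHomogeneous d)
    {w : Fin 3 → K} (hLw : L ⬝ᵥ w ≠ 0) (hpw : ∀ i, (p i ⨯₃ q) ⬝ᵥ w ≠ 0) (hfw : eval w f ≠ 0) :
    (2 * n + 1) * m ≤ (n + 1) * d := by
  set N := ∏ i, linearForm (p i ⨯₃ q)
  set μ := (L ⬝ᵥ w) ^ (n + 1) / eval w N
  have hN : eval w N ≠ 0 := by
    simpa only [N, map_prod, eval_linearForm] using Finset.prod_ne_zero_iff.2 fun i _ => hpw i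
  have hGhom : (C μ * N).IsHomogeneous (n + 1) := by
    rw [← hι]
    exact (isHomogeneous_prod_linearForm _).C_mul μ
  have hdvd := pow_mul_prod_pow_dvd_aeval_deJonquieres (n := n) (G := C μ * N) hq hp
    hLp htriple (fun i => (Finset.dvd_prod_of_mem _ (Finset.mem_univ i)).mul_left _) hfq hfp
  have hne : aeval (deJonquieres L q (C μ * N) n) f ≠ 0 := by
    intro h0
    have heval := eval_aeval_deJonquieres (L := L) (q := q) (G := C μ * N) (n := n) (w := w)
      (by rw [map_mul, eval_C, div_mul_cancel₀ _ hN]) hfd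
    rw [h0, map_zero] at heval
    exact mul_ne_zero (pow_ne_zero _ (mul_ne_zero hq (pow_ne_zero _ hLw))) hfw heval.symm
  have hleft : ((linearForm L ^ n) ^ m * ∏ i, linearForm (p i ⨯₃ q) ^ m).IsHomogeneous
      (1 * n * m + ∑ _i : ι, 1 * m) :=
    (((isHomogeneous_linearForm L).pow n).pow m).mul
      (.prod _ _ _ fun i _ => (isHomogeneous_linearForm _).pow m)
  have hdeg := totalDegree_le_of_dvd_of_isDomain hdvd hne
  rw [hleft.totalDegree (ne_zero_of_dvd_ne_zero hne hdvd),
    (hfd.aeval _ fun j => isHomogeneous_deJonquieres hGhom j).totalDegree hne] at hdeg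
  calc (2 * n + 1) * m = 1 * n * m + ∑ _i : ι, 1 * m := by simp [hι]; ring
    _ ≤ _ := hdeg

theorem mul_le_mul_degree_of_mem_pointIdeal_pow (hι : Fintype.card ι = n + 1)
    (hq : L ⬝ᵥ q ≠ 0) (hp : ∀ i, p i ≠ 0) (hLp : ∀ i, L ⬝ᵥ p i = 0)
    (htriple : Pairwise fun i j => q ⬝ᵥ p i ⨯₃ p j ≠ 0) {m d : ℕ} {f : MvPolynomial (Fin 3) K}
    (hfq : f ∈ pointIdeal q ^ m) (hfp : ∀ i, f ∈ pointIdeal (p i) ^ m) (hfd : f.IsHomogeneous d)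
    (hf : f ≠ 0) : (2 * n + 1) * m ≤ (n + 1) * d := by
  let F := FractionRing (MvPolynomial (Fin 3) K)
  let ψ : MvPolynomial (Fin 3) K →+* F := algebraMap _ _
  let φ : K →+* F := ψ.comp C
  have hψ : Function.Injective ψ := IsFractionRing.injective _ _
  have heval (g : MvPolynomial (Fin 3) K) : eval (ψ ∘ X) (MvPolynomial.map φ g) = ψ g := by
    rw [eval_map, ← eval₂_comp_left, eval₂_eta]
  have hlin (a : Fin 3 → K) : (φ ∘ a) ⬝ᵥ (ψ ∘ X) = ψ (linearForm a) :=
    (ψ.map_dotProduct (C ∘ a) X).symm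
  have hdot (a b : Fin 3 → K) : (φ ∘ a) ⬝ᵥ (φ ∘ b) = φ (a ⬝ᵥ b) := (φ.map_dotProduct a b).symm
  have hne {a : Fin 3 → K} (ha : a ≠ 0) : (φ ∘ a) ⬝ᵥ (ψ ∘ X) ≠ 0 := by
    rw [hlin]
    exact (map_ne_zero_iff ψ hψ).2 (linearForm_ne_zero ha)
  refine mul_le_mul_degree_of_eval_ne_zero (L := φ ∘ L) (q := φ ∘ q) (p := fun i => φ ∘ p i)
    (w := ψ ∘ X) (f := MvPolynomial.map φ f) hι ?_ (fun i h => hne (hp i) ?_) (fun i => ?_)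
    (fun i j hij => ?_) (map_mem_pointIdeal_pow φ hfq) (fun i => map_mem_pointIdeal_pow φ (hfp i))
    (hfd.map φ) (hne ?_) (fun i => ?_) ?_
  · rwa [hdot, map_ne_zero]
  · rw [h, zero_dotProduct]
  · rw [hdot, hLp, map_zero]
  · simpa only [← comp_cross, hdot, map_ne_zero] using htriple hij
  · rintro rfl
    exact hq (zero_dotProduct q)
  · rw [← comp_cross]
    exact hne (cross_ne_zero_of_dot (hp i) (hLp i) hq)
  · rwa [heval, map_ne_zero_iff ψ hψ]

end LowerBound

section InitialDegree

variable {K ι : Type*} [Field K] [Fintype ι] {n : ℕ} {L q : Fin 3 → K} {p : ι → Fin 3 → K}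

theorem exists_isHomogeneous_mem_pointIdeal_pow (hι : Fintype.card ι = n + 1)
    (hq : L ⬝ᵥ q ≠ 0) (hp : ∀ i, p i ≠ 0) (hLp : ∀ i, L ⬝ᵥ p i = 0) (m : ℕ) :
    ∃ d, ∃ f : MvPolynomial (Fin 3) K, f.IsHomogeneous d ∧ f ≠ 0 ∧ f ∈ pointIdeal q ^ m ∧
      (∀ i, f ∈ pointIdeal (p i) ^ m) ∧ (n + 1) * d ≤ (2 * n + 1) * m + (n + 1) ^ 2 := by
  set k := m / (n + 1) + 1
  set N := ∏ i, linearForm (p i ⨯₃ q)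
  have hN : N.IsHomogeneous (n + 1) := hι ▸ isHomogeneous_prod_linearForm _
  have hL : L ≠ 0 := by
    rintro rfl
    exact hq (zero_dotProduct q)
  have hNq : N ∈ pointIdeal q ^ (n + 1) := by
    simpa [hι] using Ideal.prod_mem_prod (s := Finset.univ) fun i _ =>
      linearForm_mem_pointIdeal ((dotProduct_comm _ _).trans (dot_cross_self (p i) q))
  have hNp (i : ι) : N ∈ pointIdeal (p i) :=
    Ideal.mem_of_dvd _ (Finset.dvd_prod_of_mem _ (Finset.mem_univ i))
      (linearForm_mem_pointIdeal ((dotProduct_comm _ _).trans (dot_self_cross (p i) q)))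
  refine ⟨1 * (m - k) + (n + 1) * k, linearForm L ^ (m - k) * N ^ k,
    ((isHomogeneous_linearForm L).pow _).mul (hN.pow k), ?_, ?_, fun i => ?_, ?_⟩
  · exact mul_ne_zero (pow_ne_zero _ (linearForm_ne_zero hL)) (pow_ne_zero _
      (Finset.prod_ne_zero_iff.2 fun i _ =>
        linearForm_ne_zero (cross_ne_zero_of_dot (hp i) (hLp i) hq)))
  · have hm : m ≤ (n + 1) * k := (Nat.lt_mul_div_succ m n.succ_pos).le
    refine Ideal.mul_mem_left _ _ (Ideal.pow_le_pow_right hm ?_)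
    rw [pow_mul]
    exact Ideal.pow_mem_pow hNq k
  · refine Ideal.pow_le_pow_right (show m ≤ m - k + k by lia) ?_
    rw [pow_add]
    exact Ideal.mul_mem_mul (Ideal.pow_mem_pow (linearForm_mem_pointIdeal (hLp i)) _)
      (Ideal.pow_mem_pow (hNp i) k)
  · have hkm : (n + 1) * k ≤ m + (n + 1) := by
      rw [mul_add, mul_one]
      gcongr
      exact Nat.mul_div_le m (n + 1)
    have hmk : m - k + k ≤ m + 1 := by
      have := Nat.div_le_self m (n + 1)
      lia
    calc (n + 1) * (1 * (m - k) + (n + 1) * k) = (n + 1) * (m - k + k) + n * ((n + 1) * k) := by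
          ring
      _ ≤ (n + 1) * (m + 1) + n * (m + (n + 1)) := by gcongr
      _ = (2 * n + 1) * m + (n + 1) ^ 2 := by ring

/-- `α(J)`: the least degree of a nonzero form in `J`, and `0` when `J` contains no such form. -/
noncomputable def initialDegree (J : Ideal (MvPolynomial (Fin 3) K)) : ℕ :=
  sInf {d | hdim J d ≠ 0}

lemma hdim_ne_zero_iff {J : Ideal (MvPolynomial (Fin 3) K)} {d : ℕ} :
    hdim J d ≠ 0 ↔ ∃ f ∈ J, f.IsHomogeneous d ∧ f ≠ 0 := by
  have : Module.Finite K (homogeneousSubmodule (Fin 3) K d) :=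
    Module.Finite.iff_fg.2 (homogeneousSubmodule_fg (Fin 3) K d)
  have : Module.Finite K (degComp J d) :=
    Submodule.finiteDimensional_of_le (S₂ := homogeneousSubmodule (Fin 3) K d) inf_le_right
  rw [hdim, Ne, Submodule.finrank_eq_zero, ← Ne, Submodule.ne_bot_iff]
  simp only [degComp, Submodule.mem_inf, Submodule.restrictScalars_mem, mem_homogeneousSubmodule,
    and_assoc]

theorem card_mul_initialDegree_mem_Icc (hι : Fintype.card ι = n + 1)
    (hq : L ⬝ᵥ q ≠ 0) (hp : ∀ i, p i ≠ 0) (hLp : ∀ i, L ⬝ᵥ p i = 0)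
    (hpp : Pairwise fun i j => ∀ c : K, c • p i ≠ p j) (m : ℕ) :
    (n + 1) * initialDegree (pointIdeal q ^ m ⊓ ⨅ i, pointIdeal (p i) ^ m) ∈
      Set.Icc ((2 * n + 1) * m) ((2 * n + 1) * m + (n + 1) ^ 2) := by
  set J := pointIdeal q ^ m ⊓ ⨅ i, pointIdeal (p i) ^ m
  have hJ {f} : f ∈ J ↔ f ∈ pointIdeal q ^ m ∧ ∀ i, f ∈ pointIdeal (p i) ^ m := by
    simp only [J, Submodule.mem_inf, Submodule.mem_iInf]
  obtain ⟨d, f, hfd, hf, hfq, hfp, hd⟩ :=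
    exists_isHomogeneous_mem_pointIdeal_pow hι hq hp hLp m
  have hdJ : hdim J d ≠ 0 := hdim_ne_zero_iff.2 ⟨f, hJ.2 ⟨hfq, hfp⟩, hfd, hf⟩
  have hmem : hdim J (initialDegree J) ≠ 0 := Nat.sInf_mem (s := {d | hdim J d ≠ 0}) ⟨d, hdJ⟩
  obtain ⟨g, hgJ, hgd, hg⟩ := hdim_ne_zero_iff.1 hmem
  obtain ⟨hgq, hgp⟩ := hJ.1 hgJ
  have htriple : Pairwise fun i j => q ⬝ᵥ p i ⨯₃ p j ≠ 0 := fun i j hij =>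
    triple_product_ne_zero (hp i) (hpp hij) (hLp i) (hLp j) hq
  refine ⟨mul_le_mul_degree_of_mem_pointIdeal_pow hι hq hp hLp htriple hgq hgp hgd hg, ?_⟩
  exact (Nat.mul_le_mul_left _ (Nat.sInf_le hdJ)).trans hd

end InitialDegree

lemma tendsto_div_of_mul_mem_Icc {u : ℕ → ℕ} {a b c : ℕ} (hc : 0 < c)
    (hu : ∀ m, c * u m ∈ Set.Icc (a * m) (a * m + b)) :
    Tendsto (fun m => (u m : ℝ) / m) atTop (nhds (a / c)) := by
  have hlim : Tendsto (fun m : ℕ => (a / c : ℝ) + b / c / m) atTop (nhds (a / c)) := by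
    simpa using tendsto_const_nhds.add (tendsto_const_div_atTop_nhds_zero_nat (b / c : ℝ))
  refine tendsto_of_tendsto_of_tendsto_of_le_of_le' tendsto_const_nhds hlim ?_ ?_ <;>
    filter_upwards [eventually_gt_atTop 0] with m hm
  · rw [div_le_div_iff₀ (by positivity) (by positivity), mul_comm (u m : ℝ)]
    exact_mod_cast (hu m).1
  · have hm' : (m : ℝ) ≠ 0 := by positivity
    have hadd : (a / c + b / c / m : ℝ) = (a * m + b) / (c * m) := by field_simp
    rw [hadd, div_le_div_iff₀ (by positivity) (by positivity), ← mul_assoc, mul_comm (u m : ℝ)]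
    gcongr
    exact_mod_cast (hu m).2

end FatPoints

open FatPoints in
theorem stmt_9_general
    (K : Type*) [Field K] (l : ℕ) (hl : 0 < l) (p : Fin (l + 1) → Fin 3 → K)
    (hdist : ∀ i j, i ≠ j → ∀ c : K, c • p i ≠ p j) (L : Fin 3 → K)
    (hon : ∀ i : Fin (l + 1), (i : ℕ) < l → ∑ j, L j * p i j = 0)
    (hoff : ∑ j, L j * p (Fin.last l) j ≠ 0)
    (P : Fin (l + 1) → Ideal (MvPolynomial (Fin 3) K))
    (hP : ∀ i F, F ∈ P i ↔ ∀ n, eval (p i) (homogeneousComponent n F) = 0)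
    (Jm : ℕ → Ideal (MvPolynomial (Fin 3) K)) (hJm : ∀ m, Jm m = ⨅ i, P i ^ m)
    (α : ℕ → ℕ) (hα : ∀ m, α m = sInf {d | hdim (Jm m) d ≠ 0}) :
    Tendsto (fun m : ℕ => (α m : ℝ) / m) atTop (nhds (2 - 1 / l)) := by
  obtain ⟨n, rfl⟩ := Nat.exists_eq_add_one.2 hl
  have hPp (i) : P i = pointIdeal (p i) :=
    Ideal.ext fun F => (hP i F).trans mem_pointIdeal_iff_eval_homogeneousComponent.symm
  have hJ (m) : Jm m = pointIdeal (p (Fin.last (n + 1))) ^ m ⊓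
      ⨅ i : Fin (n + 1), pointIdeal (p i.castSucc) ^ m := by
    ext f
    simp only [hJm, Ideal.mem_iInf, Ideal.mem_inf, hPp, Fin.forall_fin_succ', and_comm]
  have hp0 (i : Fin (n + 1)) : p i.castSucc ≠ 0 := fun h =>
    hdist (Fin.last _) _ i.castSucc_ne_last.symm 0 ((zero_smul K _).trans h.symm)
  have hbound (m) : (n + 1) * α m ∈ Set.Icc ((2 * n + 1) * m) ((2 * n + 1) * m + (n + 1) ^ 2) := by
    rw [hα, hJ]
    exact card_mul_initialDegree_mem_Icc (Fintype.card_fin _) hoff hp0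
      (fun i => hon _ i.isLt) (fun i j hij => hdist _ _ ((Fin.castSucc_injective _).ne hij)) m
  convert tendsto_div_of_mul_mem_Icc n.succ_pos hbound using 2
  push_cast
  field_simp
  ring

theorem stmt_9
    (K : Type*) [Field K] [CharZero K]
    -- `l > 2` points on a line plus one point off the line
    (l : ℕ) (hl : 2 < l)
    (p : Fin (l + 1) → Fin 3 → K) (hp0 : ∀ i, p i ≠ 0)
    (hdist : ∀ i j, i ≠ j → ∀ c : K, c • p i ≠ p j)
    (L : Fin 3 → K) (hL : L ≠ 0)
    (hon : ∀ i : Fin (l + 1), (i : ℕ) < l → ∑ j, L j * p i j = 0)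
    (hoff : ∑ j, L j * p (Fin.last l) j ≠ 0)
    -- `P i` is the homogeneous prime ideal of all forms vanishing at `p i`
    (P : Fin (l + 1) → Ideal (MvPolynomial (Fin 3) K))
    (hP : ∀ i F, F ∈ P i ↔ ∀ n, eval (p i) (homogeneousComponent n F) = 0)
    -- `Jm m = I^{(m)} = P_1^m ∩ ⋯ ∩ P_{l+1}^m`
    (Jm : ℕ → Ideal (MvPolynomial (Fin 3) K)) (hJm : ∀ m, Jm m = ⨅ i, P i ^ m)
    -- `α (Jm m)` is the least degree of a nonzero homogeneous element of `I^{(m)}`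
    (α : ℕ → ℕ) (hα : ∀ m, α m = sInf {d | hdim (Jm m) d ≠ 0}) :
    Tendsto (fun m : ℕ => (α m : ℝ) / m) atTop (nhds (2 - 1 / l)) := by
  exact stmt_9_general K l (by lia) p hdist L hon hoff P hP Jm hJm α hα
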